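/- Let A, V, W, B be vector spaces over ℚ with V and W finite-dimensional, let f : A → V and g : W → B be linear maps, and let p₁ : A × B → ℚ and p₂ : V × W → ℚ be bilinear pairings that are nondegenerate (separating in both variables) and satisfy p₁(a, g(w)) = p₂(f(a), w) for all a ∈ A and w ∈ W. Then there exist linear isomorphisms λ : range f → (range g)* and ν : range g → (range f)* such that λ(f(a))(g(w)) = p₂(f(a), w) = p₁(a, g(w)) = ν(g(w))(f(a)) for all a ∈ A and w ∈ W; in particular dim (range f) = dim (range g). -/

import Mathlib

/-!
The compatibility `p₁ (a, g w) = p₂ (f a, w)` says that `p₂ (f a, w)` depends only on `f a` and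
`g w`, so it descends to a pairing on `range f × range g`. The left kernel of that pairing is the
intersection of `range f` with the left kernel of `p₂`, and its right kernel is the intersection of
`range g` with the right kernel of `p₁`. When both vanish and `range f` is finite-dimensional over
a field, the pairing is perfect, and its two curryings are the isomorphisms `λ` and `ν`.
-/

open LinearMap Module

section CommRing

variable {R A V W B P : Type*} [CommRing R]
  [AddCommGroup A] [Module R A] [AddCommGroup V] [Module R V]
  [AddCommGroup W] [Module R W] [AddCommGroup B] [Module R B] [AddCommGroup P] [Module R P]
  {f : A →ₗ[R] V} {g : W →ₗ[R] B} {p₁ : A →ₗ[R] B →ₗ[R] P} {p₂ : V →ₗ[R] W →ₗ[R] P}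

lemma ker_le_ker_flip_domRestrict_range (h : ∀ a w, p₁ a (g w) = p₂ (f a) w) :
    ker g ≤ ker (p₂.domRestrict (range f)).flip := by
  intro w hw
  ext ⟨_, a, rfl⟩
  simp [← h, mem_ker.mp hw]

/-- The pairing `(f a, g w) ↦ p₂ (f a) w = p₁ a (g w)` between the ranges of two maps `f` and `g`
that are adjoint with respect to `p₁` and `p₂`. It is obtained from `p₂` on `range f × W` by passing
to the quotient `W ⧸ ker g ≃ range g` in the second variable. -/
noncomputable def rangePairing (h : ∀ a w, p₁ a (g w) = p₂ (f a) w) :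
    range f →ₗ[R] range g →ₗ[R] P :=
  ((ker g).liftQ (p₂.domRestrict (range f)).flip (ker_le_ker_flip_domRestrict_range h) ∘ₗ
    g.quotKerEquivRange.symm).flip

lemma rangePairing_rangeRestrict_right (h : ∀ a w, p₁ a (g w) = p₂ (f a) w) (v : range f) (w : W) :
    rangePairing h v (g.rangeRestrict w) = p₂ v w := by
  simp [rangePairing, rangeRestrict, codRestrict, quotKerEquivRange_symm_apply_image]

lemma rangePairing_rangeRestrict_left (h : ∀ a w, p₁ a (g w) = p₂ (f a) w) (a : A) (b : range g) :
    rangePairing h (f.rangeRestrict a) b = p₁ a b := by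
  obtain ⟨w, rfl⟩ := g.surjective_rangeRestrict b
  rw [rangePairing_rangeRestrict_right]
  exact (h a w).symm

lemma ker_rangePairing (h : ∀ a w, p₁ a (g w) = p₂ (f a) w) :
    ker (rangePairing h) = (ker p₂).comap (range f).subtype := by
  ext v
  simp [LinearMap.ext_iff, g.surjective_rangeRestrict.forall, rangePairing_rangeRestrict_right,
    -Subtype.forall]

lemma ker_flip_rangePairing (h : ∀ a w, p₁ a (g w) = p₂ (f a) w) :
    ker (rangePairing h).flip = (ker p₁.flip).comap (range g).subtype := by
  ext b
  simp [LinearMap.ext_iff, f.surjective_rangeRestrict.forall, rangePairing_rangeRestrict_left,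
    -Subtype.forall]

lemma rangePairing_injective_iff (h : ∀ a w, p₁ a (g w) = p₂ (f a) w) :
    Function.Injective (rangePairing h) ↔ Disjoint (range f) (ker p₂) := by
  rw [← ker_eq_bot, ker_rangePairing, Submodule.disjoint_iff_comap_eq_bot]

lemma flip_rangePairing_injective_iff (h : ∀ a w, p₁ a (g w) = p₂ (f a) w) :
    Function.Injective (rangePairing h).flip ↔ Disjoint (range g) (ker p₁.flip) := by
  rw [← ker_eq_bot, ker_flip_rangePairing, Submodule.disjoint_iff_comap_eq_bot]

end CommRing

section Field

variable {K A V W B : Type*} [Field K]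
  [AddCommGroup A] [Module K A] [AddCommGroup V] [Module K V]
  [AddCommGroup W] [Module K W] [AddCommGroup B] [Module K B]
  {f : A →ₗ[K] V} {g : W →ₗ[K] B} {p₁ : A →ₗ[K] B →ₗ[K] K} {p₂ : V →ₗ[K] W →ₗ[K] K}
  [FiniteDimensional K (range f)]

lemma isPerfPair_rangePairing (h : ∀ a w, p₁ a (g w) = p₂ (f a) w)
    (hf : Disjoint (range f) (ker p₂)) (hg : Disjoint (range g) (ker p₁.flip)) :
    (rangePairing h).IsPerfPair :=
  .of_injective ((rangePairing_injective_iff h).mpr hf) ((flip_rangePairing_injective_iff h).mpr hg)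

theorem selfdual_isos_general (h : ∀ a w, p₁ a (g w) = p₂ (f a) w)
    (hf : Disjoint (range f) (ker p₂)) (hg : Disjoint (range g) (ker p₁.flip)) :
    (∃ (lam : range f ≃ₗ[K] Dual K (range g)) (nu : range g ≃ₗ[K] Dual K (range f)),
      ∀ (a : A) (w : W),
        lam ⟨f a, mem_range_self f a⟩ ⟨g w, mem_range_self g w⟩ = p₂ (f a) w ∧
        p₂ (f a) w = p₁ a (g w) ∧
        p₁ a (g w) = nu ⟨g w, mem_range_self g w⟩ ⟨f a, mem_range_self f a⟩) ∧
    finrank K (range f) = finrank K (range g) := by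
  have := isPerfPair_rangePairing h hf hg
  refine ⟨⟨(rangePairing h).toPerfPair, (rangePairing h).flip.toPerfPair, fun a w ↦
    ⟨?_, (h a w).symm, ?_⟩⟩, finrank_of_isPerfPair (rangePairing h)⟩
  · exact rangePairing_rangeRestrict_right h (f.rangeRestrict a) w
  · exact (rangePairing_rangeRestrict_left h a (g.rangeRestrict w)).symm

end Field

/-- Self-duality of the zig-zag object `Θ₀`: given compatible nondegenerate pairings
`p₁ : A × B → ℚ` and `p₂ : V × W → ℚ` (with `V`, `W` finite-dimensional) and linear
maps `f : A → V`, `g : W → B` with `p₁ (a, g w) = p₂ (f a, w)`, there are isomorphisms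
`λ : range f ≃ (range g)*` and `ν : range g ≃ (range f)*` compatible with the pairings;
in particular `dim (range f) = dim (range g)`. -/
theorem selfdual_isos
    (A V W B : Type*)
    [AddCommGroup A] [Module ℚ A] [AddCommGroup V] [Module ℚ V]
    [AddCommGroup W] [Module ℚ W] [AddCommGroup B] [Module ℚ B]
    [FiniteDimensional ℚ V] [FiniteDimensional ℚ W]
    (f : A →ₗ[ℚ] V) (g : W →ₗ[ℚ] B)
    (p₁ : A →ₗ[ℚ] B →ₗ[ℚ] ℚ) (p₂ : V →ₗ[ℚ] W →ₗ[ℚ] ℚ)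
    (h₁l : ∀ a : A, (∀ b : B, p₁ a b = 0) → a = 0)
    (h₁r : ∀ b : B, (∀ a : A, p₁ a b = 0) → b = 0)
    (h₂l : ∀ v : V, (∀ w : W, p₂ v w = 0) → v = 0)
    (h₂r : ∀ w : W, (∀ v : V, p₂ v w = 0) → w = 0)
    (hcompat : ∀ (a : A) (w : W), p₁ a (g w) = p₂ (f a) w) :
    (∃ (lam : LinearMap.range f ≃ₗ[ℚ] Module.Dual ℚ (LinearMap.range g))
       (nu : LinearMap.range g ≃ₗ[ℚ] Module.Dual ℚ (LinearMap.range f)),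
      ∀ (a : A) (w : W),
        lam ⟨f a, LinearMap.mem_range_self f a⟩ ⟨g w, LinearMap.mem_range_self g w⟩
          = p₂ (f a) w ∧
        p₂ (f a) w = p₁ a (g w) ∧
        p₁ a (g w)
          = nu ⟨g w, LinearMap.mem_range_self g w⟩ ⟨f a, LinearMap.mem_range_self f a⟩) ∧
    Module.finrank ℚ (LinearMap.range f) = Module.finrank ℚ (LinearMap.range g) :=
  selfdual_isos_general hcompat
    (by simp [separatingLeft_iff_ker_eq_bot.mp h₂l])
    (by simp [separatingRight_iff_flip_ker_eq_bot.mp h₁r])
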